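/- arXiv:1609.03371 — 2 statements merged into one kernel-verified Lean document; each statement's English description precedes it below -/
import Mathlib

section
/- Every Π⁰₁ equivalence relation E on ω is computably reducible to the word problem of some finitely generated group of computable permutations of ω. In particular, there is a group generated by three computable permutations whose word problem is Π⁰₁-universal. -/
/-- The c.e. set with index `e` in a standard enumeration. -/
def WSet (e : ℕ) : Set ℕ := {n | ((Denumerable.ofNat Nat.Partrec.Code e).eval n).Dom}

/-- A set of naturals is computably enumerable. -/
def CeSet (A : Set ℕ) : Prop := ∃ e : ℕ, A = WSet e

/-- Product of two sets of naturals under the standard pairing. -/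
def ProdSet (A C : Set ℕ) : Set ℕ := {p | p.unpair.1 ∈ A ∧ p.unpair.2 ∈ C}

/-- `(A, B)` is an effectively inseparable pair. -/
def EffInsep (A B : Set ℕ) : Prop :=
  ∃ ψ : ℕ →. ℕ, Partrec ψ ∧
    ∀ u v : ℕ, A ⊆ WSet u → B ⊆ WSet v → WSet u ∩ WSet v = ∅ →
      ∃ z ∈ ψ (Nat.pair u v), z ∉ WSet u ∪ WSet v
/-- A binary relation on ℕ is Π⁰₁: its complement is computably enumerable. -/
def Pi01Rel (E : ℕ → ℕ → Prop) : Prop :=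
  ∃ e : ℕ, ∀ x y : ℕ, ¬ E x y ↔ Nat.pair x y ∈ WSet e


section partA
open Equiv (Perm swap swap_apply_def swap_apply_left swap_apply_of_ne_of_ne)

/-- bi-infinite shift on the naturals -/
def shiftZ : Perm ℕ where
  toFun z := if z = 1 then 0 else if z % 2 = 0 then z + 2 else z - 2
  invFun z := if z = 0 then 1 else if z % 2 = 0 then z - 2 else z + 2
  left_inv z := by grind
  right_inv z := by grind

theorem shiftZ_pow (m : ℕ) : (shiftZ ^ m) 0 = 2 * m := by
  induction m with
  | zero => rfl
  | succ m ih =>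
    rw [pow_succ', Perm.mul_apply, ih]
    simp only [shiftZ, Equiv.coe_fn_mk]
    split_ifs <;> omega

def genT : Perm (ℕ × ℕ × ℕ) where
  toFun q := (q.1, shiftZ q.2.1, q.2.2)
  invFun q := (q.1, shiftZ.symm q.2.1, q.2.2)
  left_inv q := by simp
  right_inv q := by simp

theorem genT_pow (m : ℕ) (p z v : ℕ) : (genT ^ m) (p, z, v) = (p, (shiftZ ^ m) z, v) := by
  induction m with
  | zero => rfl
  | succ m ih => rw [pow_succ', Perm.mul_apply, ih, pow_succ', Perm.mul_apply]; rfl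

def genA (F : ℕ → ℕ → ℕ) : Perm (ℕ × ℕ × ℕ) where
  toFun q := (q.1, q.2.1, swap 1 (F (q.2.1 / 2) q.1 + 2) q.2.2)
  invFun q := (q.1, q.2.1, swap 1 (F (q.2.1 / 2) q.1 + 2) q.2.2)
  left_inv q := by simp
  right_inv q := by simp

def genB : Perm (ℕ × ℕ × ℕ) where
  toFun q := (q.1, q.2.1, if q.2.1 = 0 then swap 0 1 q.2.2 else q.2.2)
  invFun q := (q.1, q.2.1, if q.2.1 = 0 then swap 0 1 q.2.2 else q.2.2)
  left_inv q := by
    rcases q with ⟨p, z, v⟩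
    by_cases h : z = 0 <;> simp [h]
  right_inv q := by
    rcases q with ⟨p, z, v⟩
    by_cases h : z = 0 <;> simp [h]

def genU (F : ℕ → ℕ → ℕ) (m : ℕ) : Perm (ℕ × ℕ × ℕ) := (genT⁻¹) ^ m * (genA F * genT ^ m)
def genV (F : ℕ → ℕ → ℕ) (m : ℕ) : Perm (ℕ × ℕ × ℕ) := (genT⁻¹) ^ m * ((genA F)⁻¹ * genT ^ m)

theorem genU_apply (F : ℕ → ℕ → ℕ) (m p z v : ℕ) :
    genU F m (p, z, v) = (p, z, swap 1 (F ((shiftZ ^ m) z / 2) p + 2) v) := by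
  rw [genU, inv_pow, Perm.mul_apply, Perm.mul_apply, Perm.inv_eq_iff_eq, genT_pow, genT_pow]
  rfl

theorem genV_apply (F : ℕ → ℕ → ℕ) (m p z v : ℕ) :
    genV F m (p, z, v) = (p, z, swap 1 (F ((shiftZ ^ m) z / 2) p + 2) v) := by
  rw [genV, inv_pow, Perm.mul_apply, Perm.mul_apply, Perm.inv_eq_iff_eq, genT_pow, genT_pow]
  rfl

def genW (F : ℕ → ℕ → ℕ) (m : ℕ) : Perm (ℕ × ℕ × ℕ) := genU F m * (genB * genV F m)

theorem genW_apply (F : ℕ → ℕ → ℕ) (m p z v : ℕ) :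
    genW F m (p, z, v) = (p, z, if z = 0 then swap 1 (F m p + 2) (swap 0 1 (swap 1 (F m p + 2) v))
      else v) := by
  rw [genW, Perm.mul_apply, Perm.mul_apply, genV_apply]
  by_cases h : z = 0
  · subst h
    simp [genB, genU_apply, shiftZ_pow]
  · simp [genB, genU_apply, h]

theorem genW_eq_iff (F : ℕ → ℕ → ℕ) (m m' : ℕ) :
    genW F m = genW F m' ↔ ∀ p, F m p = F m' p := by
  constructor
  · intro h p
    have h1 := congrArg (fun σ : Perm (ℕ × ℕ × ℕ) => σ (p, 0, 0)) h
    have e : ∀ k, swap 1 (k + 2) (swap 0 1 (swap 1 (k + 2) 0)) = k + 2 := by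
      intro k
      rw [swap_apply_of_ne_of_ne (a := 1) (x := 0) (by omega) (by omega), swap_apply_left,
        swap_apply_left]
    simp only [genW_apply, if_true, e] at h1
    simpa using h1
  · intro h
    ext1 ⟨p, z, v⟩
    rw [genW_apply, genW_apply, h]

def codeE : (ℕ × ℕ × ℕ) ≃ ℕ := (Equiv.prodCongr (Equiv.refl ℕ) Nat.pairEquiv).trans Nat.pairEquiv

def gens (F : ℕ → ℕ → ℕ) : Fin 3 → Perm ℕ :=
  ![codeE.permCongrHom genT, codeE.permCongrHom (genA F), codeE.permCongrHom genB]

def rep (m : ℕ) (c : Fin 3 × Bool) : List (Fin 3 × Bool) := (List.range m).map fun _ => c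

theorem rep_eq (m c) : rep m c = List.replicate m c := by simp [rep]

def wordU (m : ℕ) (b : Bool) : List (Fin 3 × Bool) :=
  rep m (0, false) ++ ([(1, b)] ++ rep m (0, true))

def wordW (m : ℕ) : List (Fin 3 × Bool) :=
  wordU m true ++ ([(2, true)] ++ wordU m false)

theorem lift_wordW (F : ℕ → ℕ → ℕ) (m : ℕ) :
    FreeGroup.lift (gens F) (FreeGroup.mk (wordW m)) = codeE.permCongrHom (genW F m) := by
  rw [FreeGroup.lift_mk]
  simp only [wordW, wordU, rep_eq, List.map_append, List.prod_append, List.map_replicate,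
    List.prod_replicate, List.map_cons, List.map_nil, List.prod_cons, List.prod_nil, mul_one,
    genW, genU, genV, map_mul, map_pow, map_inv, cond_true, cond_false]
  rfl

theorem wordW_iff (F : ℕ → ℕ → ℕ) (m m' : ℕ) :
    FreeGroup.lift (gens F) (FreeGroup.mk (wordW m)) =
      FreeGroup.lift (gens F) (FreeGroup.mk (wordW m')) ↔ ∀ p, F m p = F m' p := by
  rw [lift_wordW, lift_wordW, EmbeddingLike.apply_eq_iff_eq, genW_eq_iff]

theorem rep_comp (c : Fin 3 × Bool) : Computable fun m => rep m c :=
  (Primrec.list_map Primrec.list_range (Primrec.const c).to₂).to_comp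

theorem wordW_comp : Computable wordW := by
  have hU : ∀ b, Computable fun m => wordU m b := fun b =>
    Computable.list_append.comp (rep_comp _)
      (Computable.list_append.comp (Computable.const _) (rep_comp _))
  exact Computable.list_append.comp (hU _)
      (Computable.list_append.comp (Computable.const _) (hU _))

theorem codeE_comp : Computable codeE :=
  (Primrec₂.natPair.comp Primrec.fst
    (Primrec₂.natPair.comp (Primrec.fst.comp Primrec.snd) (Primrec.snd.comp Primrec.snd))).to_comp

theorem codeE_symm_comp : Computable codeE.symm := by
  have h : Primrec fun n : ℕ => (n.unpair.1, n.unpair.2.unpair.1, n.unpair.2.unpair.2) :=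
    have h1 := Primrec.fst.comp Primrec.unpair
    have h2 := Primrec.snd.comp Primrec.unpair
    h1.pair ((h1.comp h2).pair (h2.comp h2))
  exact h.to_comp

theorem swap_prim : Primrec fun q : ℕ × ℕ × ℕ => swap q.1 q.2.1 q.2.2 := by
  have h1 : Primrec fun q : ℕ × ℕ × ℕ => q.1 := Primrec.fst
  have h2 : Primrec fun q : ℕ × ℕ × ℕ => q.2.1 := Primrec.fst.comp Primrec.snd
  have h3 : Primrec fun q : ℕ × ℕ × ℕ => q.2.2 := Primrec.snd.comp Primrec.snd
  exact (Primrec.ite (Primrec.eq.comp h3 h1) h2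
    (Primrec.ite (Primrec.eq.comp h3 h2) h1 h3)).of_eq fun q => by
      rw [swap_apply_def]

theorem shiftZ_prim : Primrec shiftZ := by
  have i : Primrec fun z : ℕ => z := Primrec.id
  have h : Primrec fun z : ℕ => if z = 1 then 0 else if z % 2 = 0 then z + 2 else z - 2 :=
    Primrec.ite (Primrec.eq.comp i (Primrec.const 1)) (Primrec.const 0)
      (Primrec.ite (Primrec.eq.comp (Primrec.nat_mod.comp i (Primrec.const 2)) (Primrec.const 0))
        (Primrec.nat_add.comp i (Primrec.const 2)) (Primrec.nat_sub.comp i (Primrec.const 2)))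
  exact h

theorem conj_comp (σ : Perm (ℕ × ℕ × ℕ)) (hσ : Computable σ) :
    Computable ⇑(codeE.permCongrHom σ) := by
  have h : Computable fun n => codeE (σ (codeE.symm n)) :=
    codeE_comp.comp (hσ.comp codeE_symm_comp)
  exact h

theorem genT_comp : Computable genT := by
  have h1 : Computable fun q : ℕ × ℕ × ℕ => q.1 := Computable.fst
  have h2 : Computable fun q : ℕ × ℕ × ℕ => q.2.1 := Computable.fst.comp Computable.snd
  have h3 : Computable fun q : ℕ × ℕ × ℕ => q.2.2 := Computable.snd.comp Computable.snd
  exact h1.pair ((shiftZ_prim.to_comp.comp h2).pair h3)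

theorem genA_comp (F : ℕ → ℕ → ℕ) (hF : Computable₂ F) : Computable (genA F) := by
  have h1 : Computable fun q : ℕ × ℕ × ℕ => q.1 := Computable.fst
  have h2 : Computable fun q : ℕ × ℕ × ℕ => q.2.1 := Computable.fst.comp Computable.snd
  have h3 : Computable fun q : ℕ × ℕ × ℕ => q.2.2 := Computable.snd.comp Computable.snd
  have hd : Computable fun q : ℕ × ℕ × ℕ => q.2.1 / 2 :=
    Computable.comp (f := fun n : ℕ => n / 2)
      (Primrec.nat_div.comp Primrec.id (Primrec.const 2)).to_comp h2
  have hs : Computable fun n : ℕ => n + 2 :=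
    (Primrec.nat_add.comp Primrec.id (Primrec.const 2)).to_comp
  have hf : Computable fun q : ℕ × ℕ × ℕ => F (q.2.1 / 2) q.1 + 2 :=
    Computable.comp (f := fun n : ℕ => n + 2) hs (hF.comp hd h1)
  have hw : Computable fun q : ℕ × ℕ × ℕ => swap 1 (F (q.2.1 / 2) q.1 + 2) q.2.2 :=
    Computable.comp (f := fun q : ℕ × ℕ × ℕ => swap q.1 q.2.1 q.2.2) swap_prim.to_comp
      (g := fun q : ℕ × ℕ × ℕ => (1, F (q.2.1 / 2) q.1 + 2, q.2.2))
      ((Computable.const 1).pair (hf.pair h3))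
  exact h1.pair (h2.pair hw)

theorem genB_comp : Computable genB := by
  have h1 : Primrec fun q : ℕ × ℕ × ℕ => q.1 := Primrec.fst
  have h2 : Primrec fun q : ℕ × ℕ × ℕ => q.2.1 := Primrec.fst.comp Primrec.snd
  have h3 : Primrec fun q : ℕ × ℕ × ℕ => q.2.2 := Primrec.snd.comp Primrec.snd
  have hw : Primrec fun q : ℕ × ℕ × ℕ => swap 0 1 q.2.2 :=
    Primrec.comp (f := fun q : ℕ × ℕ × ℕ => swap q.1 q.2.1 q.2.2) swap_prim
      (g := fun q : ℕ × ℕ × ℕ => (0, 1, q.2.2))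
      ((Primrec.const 0).pair ((Primrec.const 1).pair h3))
  have : Primrec fun q : ℕ × ℕ × ℕ =>
      (q.1, q.2.1, if q.2.1 = 0 then swap 0 1 q.2.2 else q.2.2) :=
    h1.pair (h2.pair (Primrec.ite (Primrec.eq.comp h2 (Primrec.const 0)) hw h3))
  exact this.to_comp

theorem gens_comp (F : ℕ → ℕ → ℕ) (hF : Computable₂ F) : ∀ i : Fin 3, Computable ⇑(gens F i) :=
  Fin.forall_fin_succ.2 ⟨conj_comp _ genT_comp, Fin.forall_fin_two.2
    ⟨conj_comp _ (genA_comp F hF), conj_comp _ genB_comp⟩⟩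

end partA


section partB
open Nat.Partrec (Code)

theorem find_comp {α : Type*} [Primcodable α] (P : α → ℕ → Prop) [∀ a, DecidablePred (P a)]
    (hP : PrimrecRel P) (H : ∀ a, ∃ n, P a n) : Computable fun a => Nat.find (H a) := by
  have h1 : Computable₂ fun (a : α) (n : ℕ) => decide (P a n) := by
    obtain ⟨_, h⟩ := hP
    refine Computable.of_eq h.to_comp ?_
    intro q
    simp
  have h2 : Partrec fun a => Nat.rfind fun n => Part.some (decide (P a n)) := Partrec.rfind h1
  refine h2.of_eq_tot fun a => ?_
  refine Nat.mem_rfind.2 ?_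
  refine ⟨by simpa using Nat.find_spec (H a), fun {m} hm => ?_⟩
  simpa using Nat.find_min (H a) hm

theorem evaln_none_prim (c : Code) :
    PrimrecPred fun q : ℕ × ℕ × ℕ => Code.evaln q.1 c (Nat.pair q.2.1 q.2.2) = none :=
  Primrec.eq.comp (Code.primrec_evaln.comp
    ((Primrec.fst.pair (Primrec.const c)).pair (Primrec₂.natPair.comp
      (Primrec.fst.comp Primrec.snd) (Primrec.snd.comp Primrec.snd)))) (Primrec.const none)

def Rst (c : Code) (s x y : ℕ) : Prop := Code.evaln s c (Nat.pair x y) = none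

instance (c : Code) (s x y : ℕ) : Decidable (Rst c s x y) := by
  unfold Rst; infer_instance

theorem Rst_prim {α : Type*} [Primcodable α] (c : Code) {s x y : α → ℕ} (hs : Primrec s)
    (hx : Primrec x) (hy : Primrec y) : PrimrecPred fun a => Rst c (s a) (x a) (y a) :=
  (evaln_none_prim c).comp (hs.pair (hx.pair hy))

theorem Rst_mono {c : Code} {s s' x y : ℕ} (h : s ≤ s') (hR : Rst c s' x y) : Rst c s x y := by
  unfold Rst at *
  by_contra h2
  obtain ⟨v, hv⟩ := Option.ne_none_iff_exists'.1 h2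
  have := Code.evaln_mono h (show v ∈ Code.evaln s c (Nat.pair x y) from hv)
  rw [hR] at this
  simp at this

/-- The stage-`s` approximation is an equivalence on `[0,x]`. -/
def Good (c : Code) (s x : ℕ) : Prop :=
  ∀ u < x + 1, ∀ v < x + 1, ∀ w < x + 1, Rst c s u v → Rst c s u w → Rst c s v w

instance (c : Code) (s x : ℕ) : Decidable (Good c s x) := by
  unfold Good; infer_instance

theorem ball_prim {α : Type*} [Primcodable α] {P : α → ℕ → Prop} (hP : PrimrecRel P)
    {b : α → ℕ} (hb : Primrec b) : PrimrecPred fun a => ∀ u < b a, P a u := by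
  have : PrimrecRel fun (u : ℕ) (a : α) => P a u :=
    PrimrecPred.comp (p := fun q : α × ℕ => P q.1 q.2) hP (Primrec.snd.pair Primrec.fst)
  exact ((PrimrecRel.forall_mem_list this).comp (Primrec.list_range.comp hb) Primrec.id).of_eq
    fun a => by simp

theorem imp_prim {α : Type*} [Primcodable α] {p q : α → Prop} (hp : PrimrecPred p)
    (hq : PrimrecPred q) : PrimrecPred fun a => p a → q a :=
  (hp.not.or hq).of_eq fun a => by tauto

theorem Good_prim {α : Type*} [Primcodable α] (c : Code) {s x : α → ℕ} (hs : Primrec s)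
    (hx : Primrec x) : PrimrecPred fun a => Good c (s a) (x a) := by
  have : PrimrecPred fun q : ℕ × ℕ => Good c q.1 q.2 := by
    unfold Good
    refine ball_prim ?_ (Primrec.succ.comp Primrec.snd)
    refine ball_prim (α := (ℕ × ℕ) × ℕ) ?_ (Primrec.succ.comp (Primrec.snd.comp Primrec.fst))
    refine ball_prim (α := ((ℕ × ℕ) × ℕ) × ℕ) ?_
      (Primrec.succ.comp (Primrec.snd.comp (Primrec.fst.comp Primrec.fst)))
    have s0 : Primrec fun q : (((ℕ × ℕ) × ℕ) × ℕ) × ℕ => q.1.1.1.1 :=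
      Primrec.fst.comp (Primrec.fst.comp (Primrec.fst.comp Primrec.fst))
    have u0 : Primrec fun q : (((ℕ × ℕ) × ℕ) × ℕ) × ℕ => q.1.1.2 :=
      Primrec.snd.comp (Primrec.fst.comp Primrec.fst)
    have v0 : Primrec fun q : (((ℕ × ℕ) × ℕ) × ℕ) × ℕ => q.1.2 := Primrec.snd.comp Primrec.fst
    have w0 : Primrec fun q : (((ℕ × ℕ) × ℕ) × ℕ) × ℕ => q.2 := Primrec.snd
    exact imp_prim (Rst_prim c s0 u0 v0) (imp_prim (Rst_prim c s0 u0 w0) (Rst_prim c s0 v0 w0))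
  exact this.comp (hs.pair hx)

/-- The key lemma on approximations of co-c.e. equivalence relations. -/
theorem exists_approx (E : ℕ → ℕ → Prop) (hE : Equivalence E) (c : Code)
    (hc : ∀ x y, ¬ E x y ↔ (c.eval (Nat.pair x y)).Dom) :
    ∃ f : ℕ → ℕ → ℕ, Computable₂ f ∧ (∀ x y n, E x y → f x n = f y n) ∧
      ∀ x y, ¬ E x y → ∃ n0, ∀ n ≥ n0, f x n ≠ f y n := by
  have ER : ∀ s x y, E x y → Rst c s x y := by
    intro s x y hxy
    unfold Rst
    by_contra h2
    obtain ⟨v, hv⟩ := Option.ne_none_iff_exists'.1 h2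
    have := Code.evaln_sound (show v ∈ Code.evaln s c (Nat.pair x y) from hv)
    exact (hc x y).2 (Part.dom_iff_mem.2 ⟨v, this⟩) hxy
  have ev1 : ∀ x y, ∃ s0, ∀ s ≥ s0, (Rst c s x y ↔ E x y) := by
    intro x y
    by_cases hxy : E x y
    · exact ⟨0, fun s _ => ⟨fun _ => hxy, fun _ => ER s x y hxy⟩⟩
    · obtain ⟨v, hv⟩ := Part.dom_iff_mem.1 ((hc x y).1 hxy)
      obtain ⟨k, hk⟩ := Code.evaln_complete.1 hv
      refine ⟨k, fun s hs => ⟨fun h => ?_, fun h => absurd h hxy⟩⟩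
      have := Rst_mono hs h
      unfold Rst at this
      rw [this] at hk
      simp at hk
  have ev : ∀ x, ∃ s0, ∀ s ≥ s0, ∀ u < x + 1, ∀ v < x + 1, (Rst c s u v ↔ E u v) := by
    intro x
    choose S hS using ev1
    refine ⟨(Finset.range (x + 1)).sup fun u => (Finset.range (x + 1)).sup fun v => S u v,
      fun s hs u hu v hv => hS u v s ?_⟩
    refine le_trans ?_ hs
    refine le_trans ?_ (Finset.le_sup (Finset.mem_range.2 hu))
    exact Finset.le_sup (f := fun v => S u v) (Finset.mem_range.2 hv)
  have goodE : ∀ x s, (∀ u < x + 1, ∀ v < x + 1, (Rst c s u v ↔ E u v)) → Good c s x := by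
    intro x s h u hu v hv w hw
    rw [h u hu v hv, h u hu w hw, h v hv w hw]
    exact fun h1 h2 => hE.trans (hE.symm h1) h2
  -- stage
  have Hs : ∀ q : ℕ × ℕ, ∃ s, q.2 ≤ s ∧ Good c s q.1 := by
    intro q
    obtain ⟨s0, h0⟩ := ev q.1
    exact ⟨max q.2 s0, le_max_left _ _, goodE _ _ (h0 _ (le_max_right _ _))⟩
  have st_comp := find_comp (fun (q : ℕ × ℕ) s => q.2 ≤ s ∧ Good c s q.1)
    (PrimrecPred.and (Primrec.nat_le.comp (Primrec.snd.comp Primrec.fst) Primrec.snd)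
      (Good_prim c Primrec.snd (Primrec.fst.comp Primrec.fst))) Hs
  set st : ℕ × ℕ → ℕ := fun q => Nat.find (Hs q) with hst
  have st_le : ∀ x n, n ≤ st (x, n) := fun x n => (Nat.find_spec (Hs (x, n))).1
  have st_good : ∀ x n, Good c (st (x, n)) x := fun x n => (Nat.find_spec (Hs (x, n))).2
  have st_mono : ∀ x y n, y ≤ x → st (y, n) ≤ st (x, n) := by
    intro x y n hyx
    refine Nat.find_min' _ ⟨st_le x n, ?_⟩
    intro u hu v hv w hw
    exact st_good x n u (by omega) v (by omega) w (by omega)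
  -- least related element
  have Hd : ∀ q : ℕ × ℕ, ∃ y, Rst c q.1 y q.2 := fun q => ⟨q.2, ER _ _ _ (hE.refl _)⟩
  have d_comp0 := find_comp (fun (q : ℕ × ℕ) y => Rst c q.1 y q.2)
    (Rst_prim c (Primrec.fst.comp Primrec.fst) Primrec.snd (Primrec.snd.comp Primrec.fst)) Hd
  set d : ℕ → ℕ → ℕ := fun n x => Nat.find (Hd (st (x, n), x)) with hd
  have d_comp : Computable₂ d :=
    d_comp0.comp ((st_comp.comp (Computable.snd.pair Computable.fst)).pair Computable.snd)
  have d_spec : ∀ n x, Rst c (st (x, n)) (d n x) x := fun n x => Nat.find_spec (Hd (st (x, n), x))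
  have d_min : ∀ n x y, Rst c (st (x, n)) y x → d n x ≤ y :=
    fun n x y h => Nat.find_min' (Hd (st (x, n), x)) h
  have d_le : ∀ n x, d n x ≤ x := fun n x => d_min n x x (ER _ _ _ (hE.refl _))
  -- the function
  obtain ⟨f, hf⟩ : ∃ f : ℕ → ℕ → ℕ, ∀ n x, f n x = if d n x < x then f n (d n x) else x := by
    refine ⟨fun n => WellFounded.fix (measure id).wf
      (fun x F => if h : d n x < x then F (d n x) h else x), fun n x => ?_⟩
    dsimp only
    rw [WellFounded.fix_eq]
    split_ifs <;> rfl
  have f_comp : Computable₂ f := by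
    have hdl : Computable fun q : ℕ × List ℕ => d q.1 q.2.length :=
      d_comp.comp Computable.fst (Computable.list_length.comp Computable.snd)
    have hg : Computable₂ fun (n : ℕ) (l : List ℕ) =>
        if d n l.length < l.length then l[d n l.length]? else some l.length := by
      have hlt : Computable fun q : ℕ × List ℕ => decide (d q.1 q.2.length < q.2.length) :=
        (Primrec.nat_lt.decide.to_comp).comp hdl (Computable.list_length.comp Computable.snd)
      refine (Computable.cond hlt (Computable.list_getElem?.comp Computable.snd hdl)
        (Computable.option_some.comp (Computable.list_length.comp Computable.snd))).of_eq ?_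
      intro q
      simp [Bool.cond_decide]
    refine Computable.nat_strong_rec f hg ?_
    intro n x
    rw [hf n x]
    simp only [List.length_map, List.length_range]
    split_ifs with h
    · simp [h]
    · rfl
  have f_inv : ∀ n v u, u ≤ v → Rst c (st (v, n)) u v → f n u = f n v := by
    intro n v
    induction v using Nat.strong_induction_on with
    | _ v ih =>
      intro u huv hR
      rcases Nat.lt_or_eq_of_le huv with hlt | rfl
      · have h1 : d n v ≤ u := d_min _ _ _ hR
        have h2 : f n v = f n (d n v) := by
          conv_lhs => rw [hf n v, if_pos (by omega)]
        rw [h2]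
        have hg := st_good v n
        have hvv : ∀ z, Rst c (st (v, n)) z z := fun z => ER _ _ _ (hE.refl _)
        have e1 : Rst c (st (v, n)) v (d n v) :=
          hg (d n v) (by omega) v (by omega) (d n v) (by omega) (d_spec n v) (hvv _)
        have e2 : Rst c (st (v, n)) v u :=
          hg u (by omega) v (by omega) u (by omega) hR (hvv _)
        have e3 : Rst c (st (v, n)) (d n v) u :=
          hg v (by omega) (d n v) (by omega) u (by omega) e1 e2
        exact (ih u hlt (d n v) h1 (Rst_mono (st_mono v u n huv) e3)).symm
      · rfl
  refine ⟨fun x n => f n x, f_comp.comp Computable.snd Computable.fst, ?_, ?_⟩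
  · intro x y n hxy
    rcases le_total x y with h | h
    · exact f_inv n y x h (ER _ _ _ hxy)
    · exact (f_inv n x y h (ER _ _ _ (hE.symm hxy))).symm
  · intro x y hxy
    obtain ⟨s0, h0⟩ := ev (max x y)
    refine ⟨s0, fun n hn he => hxy ?_⟩
    have key : ∀ z, z ≤ max x y → E (f n z) z := by
      intro z
      induction z using Nat.strong_induction_on with
      | _ z ih =>
        intro hz
        rw [hf n z]
        split_ifs with h
        · exact hE.trans (ih _ h (by omega))
            ((h0 _ (le_trans hn (st_le z n)) _ (by omega) _ (by omega)).1 (d_spec n z))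
        · exact hE.refl _
    have k1 := key x (le_max_left _ _)
    have k2 := key y (le_max_right _ _)
    dsimp only at he
    rw [he] at k1
    exact hE.trans (hE.symm k1) k2

/-- Universal family. -/
def Funiv (z p : ℕ) : ℕ :=
  if ∀ i < p.unpair.1 + 1, ¬ Code.evaln p.unpair.2 (Denumerable.ofNat Code z.unpair.1)
      (Nat.pair i p.unpair.1) = none then
    Encodable.encode (Code.evaln (p.unpair.2 + z.unpair.2.unpair.2)
      (Denumerable.ofNat Code z.unpair.1) (Nat.pair z.unpair.2.unpair.1 p.unpair.1))
  else 0

theorem Funiv_comp : Computable₂ Funiv := by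
  have a1 : Primrec fun n : ℕ => n.unpair.1 := Primrec.fst.comp Primrec.unpair
  have a2 : Primrec fun n : ℕ => n.unpair.2 := Primrec.snd.comp Primrec.unpair
  have hc : Primrec fun q : ℕ × ℕ => Denumerable.ofNat Code q.1.unpair.1 :=
    (Primrec.ofNat Code).comp (a1.comp Primrec.fst)
  have : Primrec₂ Funiv := by
    refine Primrec.ite ?_ ?_ (Primrec.const 0)
    · refine ball_prim (α := ℕ × ℕ) (b := fun q => q.2.unpair.1 + 1) ?_
        (Primrec.succ.comp (a1.comp Primrec.snd))
      refine PrimrecPred.not (Primrec.eq.comp (Code.primrec_evaln.comp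
        (((a2.comp (Primrec.snd.comp Primrec.fst)).pair (hc.comp Primrec.fst)).pair
          (Primrec₂.natPair.comp Primrec.snd (a1.comp (Primrec.snd.comp Primrec.fst)))))
        (Primrec.const none))
    · exact Primrec.encode.comp (Code.primrec_evaln.comp
        (((Primrec.nat_add.comp (a2.comp Primrec.snd) (a2.comp (a2.comp Primrec.fst))).pair hc).pair
          (Primrec₂.natPair.comp (a1.comp (a2.comp Primrec.fst)) (a1.comp Primrec.snd))))
  exact this.to_comp

theorem Funiv_universal (E : ℕ → ℕ → Prop) (hE : Equivalence E) (c : Code)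
    (hc : ∀ x y, ¬ E x y ↔ (c.eval (Nat.pair x y)).Dom) :
    ∃ h : ℕ → ℕ, Computable h ∧ ∀ x y, E x y ↔ ∀ p, Funiv (h x) p = Funiv (h y) p := by
  obtain ⟨f, f_comp, f_inv, f_sep⟩ := exists_approx E hE c hc
  obtain ⟨C, hC⟩ : ∃ C : Code, ∀ x n, C.eval (Nat.pair x n) = Part.some (f x n) := by
    have : Computable fun q : ℕ => f q.unpair.1 q.unpair.2 :=
      f_comp.comp (Computable.fst.comp Computable.unpair) (Computable.snd.comp Computable.unpair)
    obtain ⟨C, hC⟩ := Code.exists_code.1 (Partrec.nat_iff.1 this)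
    exact ⟨C, fun x n => by simp [hC]⟩
  have sound : ∀ k x n, Code.evaln k C (Nat.pair x n) ≠ none →
      Code.evaln k C (Nat.pair x n) = some (f x n) := by
    intro k x n h
    obtain ⟨v, hv⟩ := Option.ne_none_iff_exists'.1 h
    have := Code.evaln_sound (show v ∈ Code.evaln k C (Nat.pair x n) from hv)
    rw [hC, Part.mem_some_iff] at this
    rw [hv, this]
  have mono : ∀ k k' x n, k ≤ k' → Code.evaln k C (Nat.pair x n) ≠ none →
      Code.evaln k' C (Nat.pair x n) ≠ none := fun k k' x n hk h h' => h (Rst_mono hk h')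
  have conv : ∀ x n, ∃ k, Code.evaln k C (Nat.pair x n) ≠ none := by
    intro x n
    have h : f x n ∈ C.eval (Nat.pair x n) := by rw [hC]; exact Part.mem_some _
    obtain ⟨k, hk⟩ := Code.evaln_complete.1 h
    exact ⟨k, fun h => by rw [h] at hk; simp at hk⟩
  choose K hK using conv
  have HT : ∀ y, ∃ T, ∀ n < y, ¬ Rst C T y n := by
    intro y
    refine ⟨(Finset.range y).sup fun n => K y n, fun n hn => ?_⟩
    exact mono _ _ _ _ (Finset.le_sup (f := fun n => K y n) (Finset.mem_range.2 hn)) (hK y n)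
  have T_comp := find_comp (fun y T => ∀ n < y, ¬ Rst C T y n)
    (ball_prim (α := ℕ × ℕ) (b := fun q => q.1) (P := fun q n => ¬ Rst C q.2 q.1 n)
      (PrimrecPred.not (Rst_prim C (Primrec.snd.comp Primrec.fst) (Primrec.fst.comp Primrec.fst)
      Primrec.snd)) Primrec.fst) HT
  set T : ℕ → ℕ := fun y => Nat.find (HT y) with hTdef
  have T_spec : ∀ y, ∀ n < y, ¬ Rst C (T y) y n := fun y => Nat.find_spec (HT y)
  let h : ℕ → ℕ := fun y => Nat.pair (Encodable.encode C) (Nat.pair y (T y))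
  have val : ∀ y n k, Funiv (h y) (Nat.pair n k) =
      if ∀ i < n + 1, ¬ Code.evaln k C (Nat.pair i n) = none then f y n + 1 else 0 := by
    intro y n k
    simp only [Funiv, h, Nat.unpair_pair, Denumerable.ofNat_encode]
    split_ifs with hv
    · have : Code.evaln (k + T y) C (Nat.pair y n) = some (f y n) := by
        apply sound
        rcases Nat.lt_or_ge n y with hn | hn
        · exact mono _ _ _ _ (Nat.le_add_left _ _) (T_spec y n hn)
        · exact mono _ _ _ _ (Nat.le_add_right _ _) (hv y (by omega))
      rw [this]; rfl
    · rfl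
  refine ⟨h, ?_, ?_⟩
  · exact Primrec₂.natPair.to_comp.comp (Computable.const _)
      (Primrec₂.natPair.to_comp.comp Computable.id T_comp)
  · intro x y
    constructor
    · intro hxy p
      rw [← Nat.pair_unpair p, val, val, f_inv x y _ hxy]
    · intro hp
      by_contra hxy
      obtain ⟨n, hn⟩ := f_sep x y hxy
      have h1 := hp (Nat.pair n ((Finset.range (n + 1)).sup fun i => K i n))
      have hv : ∀ i < n + 1, ¬ Code.evaln ((Finset.range (n + 1)).sup fun i => K i n) C
          (Nat.pair i n) = none := fun i hi =>
        mono _ _ _ _ (Finset.le_sup (f := fun i => K i n) (Finset.mem_range.2 hi)) (hK i n)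
      rw [val, val, if_pos hv, if_pos hv] at h1
      exact hn n le_rfl (by omega)

end partB

theorem stmt15 :
    -- there is a group generated by three computable permutations of ℕ whose
    -- word problem is Π⁰₁-universal: every Π⁰₁ equivalence relation computably
    -- reduces to it
    ∃ g : Fin 3 → Equiv.Perm ℕ,
      (∀ i, Computable ⇑(g i)) ∧
      ∀ E : ℕ → ℕ → Prop, Equivalence E → Pi01Rel E →
        ∃ h : ℕ → List (Fin 3 × Bool), Computable h ∧
          ∀ x y : ℕ, E x y ↔
            FreeGroup.lift g (FreeGroup.mk (h x)) =
              FreeGroup.lift g (FreeGroup.mk (h y)) := by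
  refine ⟨gens Funiv, gens_comp Funiv Funiv_comp, ?_⟩
  intro E hE hPi
  obtain ⟨e, he⟩ := hPi
  obtain ⟨h, hh, H⟩ := Funiv_universal E hE (Denumerable.ofNat Nat.Partrec.Code e) he
  refine ⟨fun x => wordW (h x), wordW_comp.comp hh, fun x y => ?_⟩
  rw [wordW_iff]
  exact H x y
end

section
/- For every Π⁰₁ set S ⊆ ω, there exist three computable permutations β, σ, τ of ω generating a group G whose word problem (the set of words in F(β,σ,τ) equal to 1 in G) is truth-table equivalent to S. -/
open Classical in
/-- Truth-table reducibility: a total reduction procedure computing, for each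
input, a finite list of queries together with a Boolean evaluation of the
answers, fixed in advance. -/
def TTRed (A B : Set ℕ) : Prop :=
  ∃ q : ℕ → List ℕ, ∃ t : ℕ → List Bool → Bool,
    Computable q ∧ Computable₂ t ∧
    ∀ n : ℕ, n ∈ A ↔ t n ((q n).map fun m => decide (m ∈ B)) = true

/-- Truth-table equivalence. -/
def TTEquiv (A B : Set ℕ) : Prop := TTRed A B ∧ TTRed B A

namespace WP

/-- Swap `0` and `1`. -/
def sw01 (i : ℕ) : ℕ := if i = 0 then 1 else if i = 1 then 0 else i
/-- Swap `1` and `2`. -/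
def sw12 (i : ℕ) : ℕ := if i = 1 then 2 else if i = 2 then 1 else i

/-- Action of the letters on a component with parameters `n`, `x`, `y`. -/
def act (n : ℕ) (x y : Bool) (l : ℕ) (s : ℕ × ℕ) : ℕ × ℕ :=
  if l = 0 then (if s.1 % 2 = 0 then s.1 + 1 else s.1 - 1, s.2)
  else if l = 1 then
    if s.1 = 0 then (0, if x = true then sw01 s.2 else s.2)
    else (if s.1 % 2 = 0 then s.1 - 1 else s.1 + 1, s.2)
  else
    (s.1, if y = true ∧ s.1 = 2 * n then sw12 s.2 else s.2)

/-- Words in the three letters. -/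
abbrev Wd := List (Fin 3 × Bool)

/-- Evaluation of a word on a component. -/
def run (n : ℕ) (x y : Bool) (w : Wd) (s : ℕ × ℕ) : ℕ × ℕ :=
  w.foldr (fun l s => act n x y l.1.val s) s

theorem sw01_sw01 (i : ℕ) : sw01 (sw01 i) = i := by unfold sw01; grind
theorem sw12_sw12 (i : ℕ) : sw12 (sw12 i) = i := by unfold sw12; grind

theorem act_act (n : ℕ) (x y : Bool) (l : ℕ) (s : ℕ × ℕ) :
    act n x y l (act n x y l s) = s := by
  obtain ⟨p, i⟩ := s
  have h1 := sw01_sw01 i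
  have h2 := sw12_sw12 i
  unfold act
  split_ifs <;> grind

theorem run_nil (n : ℕ) (x y : Bool) (s : ℕ × ℕ) : run n x y [] s = s := rfl
theorem run_cons (n : ℕ) (x y : Bool) (l : Fin 3 × Bool) (w : Wd) (s : ℕ × ℕ) :
    run n x y (l :: w) s = act n x y l.1.val (run n x y w s) := rfl
theorem run_append (n : ℕ) (x y : Bool) (v w : Wd) (s : ℕ × ℕ) :
    run n x y (v ++ w) s = run n x y v (run n x y w s) := by
  simp [run, List.foldr_append]

/-- Fibres `≥ 3` are inert. -/
theorem run_ge (n : ℕ) (x y : Bool) (w : Wd) (p i : ℕ) (hi : 3 ≤ i) :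
    (run n x y w (p, 3)).2 = 3 ∧ run n x y w (p, i) = ((run n x y w (p, 3)).1, i) := by
  induction w with
  | nil => simp [run_nil]
  | cons l w ih =>
    obtain ⟨h1, h2⟩ := ih
    rw [run_cons, run_cons, h2]
    generalize run n x y w (p, 3) = s at *
    obtain ⟨q, j⟩ := s
    simp only at h1
    subst h1
    unfold act sw01 sw12
    grind

/-- Simulation lemma. -/
theorem run_sim (n n' : ℕ) (x x' y y' : Bool) (p d i k : ℕ)
    (hf : (d = 0 ∧ x = x') ∨ k ≤ p)
    (hc : ∀ q, q < p + k → p < q + k →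
      ((y = true ∧ q = 2 * n) ↔ (y' = true ∧ q + 2 * d = 2 * n')))
    (w : Wd) (hw : w.length ≤ k) :
    (run n x y w (p, i)).1 ≤ p + w.length ∧ p ≤ (run n x y w (p, i)).1 + w.length ∧
    run n' x' y' w (p + 2 * d, i) =
      ((run n x y w (p, i)).1 + 2 * d, (run n x y w (p, i)).2) := by
  induction w with
  | nil => simp [run_nil]
  | cons l w ih =>
    simp only [List.length_cons] at hw ⊢
    obtain ⟨h1, h2, h3⟩ := ih (by omega)
    rw [run_cons, run_cons, h3]
    generalize run n x y w (p, i) = s at *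
    obtain ⟨q, j⟩ := s
    simp only at h1 h2
    have hq := hc q (by omega) (by omega)
    unfold act
    simp only [← hq]
    by_cases hl0 : l.1.val = 0
    · simp only [hl0, if_true]
      have : (q + 2 * d) % 2 = q % 2 := by omega
      simp only [this]
      refine ⟨by split_ifs <;> omega, by split_ifs <;> omega, ?_⟩
      ext
      · simp only; split_ifs <;> omega
      · rfl
    · by_cases hl1 : l.1.val = 1
      · simp only [hl1, if_true]
        have : (q + 2 * d) % 2 = q % 2 := by omega
        rcases Nat.eq_zero_or_pos q with h0 | h0
        · have hd : d = 0 ∧ x = x' := by rcases hf with h | h; exact h; omega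
          obtain ⟨rfl, rfl⟩ := hd
          subst h0
          simp; omega
        · have e1 : q ≠ 0 := by omega
          have e2 : q + 2 * d ≠ 0 := by omega
          simp only [e1, e2, this, if_false]
          simp only [show (1:ℕ) ≠ 0 by decide, if_false]
          refine ⟨by split_ifs <;> omega, by split_ifs <;> omega, ?_⟩
          ext
          · simp only; split_ifs <;> omega
          · rfl
      · simp only [hl0, hl1, if_false]
        refine ⟨by omega, by omega, ?_⟩
        trivial

/-- `w` fixes all points at position `p`. -/
def Tr (w : Wd) (n : ℕ) (x y : Bool) (p : ℕ) : Prop := ∀ i, run n x y w (p, i) = (p, i)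

theorem Tr_of (w : Wd) (n n' : ℕ) (x x' y y' : Bool) (p d : ℕ)
    (h : Tr w n x y p)
    (hf : (d = 0 ∧ x = x') ∨ w.length ≤ p)
    (hc : ∀ q, q < p + w.length → p < q + w.length →
      ((y = true ∧ q = 2 * n) ↔ (y' = true ∧ q + 2 * d = 2 * n'))) :
    Tr w n' x' y' (p + 2 * d) := by
  intro i
  obtain ⟨-, -, h3⟩ := run_sim n n' x x' y y' p d i w.length hf hc w le_rfl
  rw [h3, h i]

theorem Tr_small (w : Wd) (n : ℕ) (x y : Bool) (p : ℕ)
    (h : ∀ i ≤ 3, run n x y w (p, i) = (p, i)) : Tr w n x y p := by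
  intro i
  rcases Nat.lt_or_ge i 3 with h' | h'
  · exact h i h'.le
  · rw [(run_ge n x y w p i h').2, h 3 le_rfl]

/-- Bounded checking suffices. -/
theorem Tr_bounded (w : Wd) (S : Set ℕ) (N P : ℕ) (hN : w.length + 3 ≤ N)
    (hP : 2 * N + w.length + 3 ≤ P)
    (h01 : ∀ n ≤ N, ∀ p ≤ P, Tr w n false true p)
    (h10 : ∀ n ≤ N, ∀ p ≤ P, Tr w n true false p)
    (h11 : ∀ n ≤ N, ∀ p ≤ P, n ∉ S → Tr w n true true p) :
    ∀ n p, Tr w n false true p ∧ Tr w n true false p ∧ (n ∉ S → Tr w n true true p) := by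
  have H10 : ∀ p n, Tr w n true false p := by
    intro p
    induction p using Nat.strong_induction_on with
    | _ p ih =>
      intro n
      rcases Nat.lt_or_ge P p with hp | hp
      · have := Tr_of w n n true true false false (p - 2) 1 (ih (p - 2) (by omega) n)
          (by right; omega) (by simp)
        rwa [show p - 2 + 2 * 1 = p by omega] at this
      · exact Tr_of w 0 n true true false false p 0 (h10 0 (by omega) p hp) (by simp) (by simp)
  have H01a : ∀ n ≤ N, ∀ p, Tr w n false true p := by
    intro n hn p
    induction p using Nat.strong_induction_on with
    | _ p ih =>
      rcases Nat.lt_or_ge P p with hp | hp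
      · have := Tr_of w n n false false true true (p - 2) 1 (ih (p - 2) (by omega))
          (by right; omega) (by intro q h1 h2; simp; omega)
        rwa [show p - 2 + 2 * 1 = p by omega] at this
      · exact h01 n hn p hp
  have H01 : ∀ n p, Tr w n false true p := by
    intro n
    induction n with
    | zero => exact H01a 0 (by omega)
    | succ n ih =>
      intro p
      rcases Nat.lt_or_ge N (n + 1) with hn | hn
      · rcases Nat.lt_or_ge p (w.length + 2) with hp | hp
        · exact Tr_of w n (n + 1) false false true true p 0 (ih p) (by simp)
            (by intro q h1 h2; simp; omega)
        · have := Tr_of w n (n + 1) false false true true (p - 2) 1 (ih (p - 2))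
            (by right; omega) (by intro q h1 h2; simp; omega)
          rwa [show p - 2 + 2 * 1 = p by omega] at this
      · exact H01a _ hn p
  intro n p
  refine ⟨H01 n p, H10 p n, fun hS => ?_⟩
  rcases Nat.lt_or_ge p w.length with hp | hp
  · rcases Nat.lt_or_ge N n with hn | hn
    · exact Tr_of w n n true true false true p 0 (H10 p n) (by simp)
        (by intro q h1 h2; simp; omega)
    · exact h11 n hn p (by omega) hS
  · exact Tr_of w n n false true true true p 0 (H01 n p) (by right; omega) (by simp)

/-! The witness words. -/

/-- Alternating palindrome centred at the letter `1`. -/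
def dW : ℕ → Wd
  | 0 => [(1, true)]
  | m + 1 => (1, true) :: (0, true) :: dW m

theorem run_dW_even (n : ℕ) (x y : Bool) (m r i : ℕ) :
    run n x y (dW m) (2 * r, i) =
      if m < r then (2 * r - (2 * m + 1), i)
      else (2 * m - 2 * r, if x = true then sw01 i else i) := by
  induction m with
  | zero =>
    simp only [dW, run_cons, run_nil, act]
    rcases Nat.eq_zero_or_pos r with h | h
    · subst h; simp
    · have : r ≠ 0 := by omega
      simp [h, this]
  | succ m ih =>
    simp only [dW, run_cons, ih]
    unfold act
    grind

theorem run_dW_odd (n : ℕ) (x y : Bool) (m r i : ℕ) :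
    run n x y (dW m) (2 * r + 1, i) = (2 * r + 1 + (2 * m + 1), i) := by
  induction m with
  | zero =>
    simp only [dW, run_cons, run_nil, act]
    grind
  | succ m ih =>
    simp only [dW, run_cons, ih]
    unfold act
    grind

theorem run_dW_invol (n : ℕ) (x y : Bool) (m : ℕ) (s : ℕ × ℕ) :
    run n x y (dW m) (run n x y (dW m) s) = s := by
  obtain ⟨p, i⟩ := s
  rcases Nat.even_or_odd' p with ⟨r, rfl | rfl⟩
  · rw [run_dW_even]
    split_ifs with h1 h2
    · rw [show 2 * r - (2 * m + 1) = 2 * (r - m - 1) + 1 by omega, run_dW_odd]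
      ext <;> simp; omega
    · rw [show 2 * m - 2 * r = 2 * (m - r) by omega, run_dW_even, if_neg (by omega), if_pos h2,
        sw01_sw01]
      ext <;> simp; omega
    · rw [show 2 * m - 2 * r = 2 * (m - r) by omega, run_dW_even, if_neg (by omega), if_neg h2]
      ext <;> simp; omega
  · rw [run_dW_odd, show 2 * r + 1 + (2 * m + 1) = 2 * (r + m + 1) by omega, run_dW_even,
      if_pos (by omega)]
    ext <;> simp; omega

/-- One half of the witness word. -/
def hW (n : ℕ) : Wd := (2, true) :: dW (2 * n)
/-- The witness word `(c d)^4`. -/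
def wW (n : ℕ) : Wd := hW n ++ (hW n ++ (hW n ++ hW n))

theorem run_hW_c (m n : ℕ) (x y : Bool) (s : ℕ × ℕ) :
    run n x y (hW m) s = 
      ((run n x y (dW (2 * m)) s).1, if y = true ∧ (run n x y (dW (2 * m)) s).1 = 2 * n then
        sw12 (run n x y (dW (2 * m)) s).2 else (run n x y (dW (2 * m)) s).2) := by
  simp [hW, run_cons, act]

theorem run_hW_2n (n : ℕ) (x y : Bool) (i : ℕ) :
    run n x y (hW n) (2 * n, i) =
      (2 * n, if y = true then sw12 (if x = true then sw01 i else i)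
        else (if x = true then sw01 i else i)) := by
  rw [run_hW_c, run_dW_even, if_neg (by omega)]
  simp
  constructor
  · omega
  · have : 2 * (2 * n) - 2 * n = 2 * n := by omega
    simp [this]

theorem wW_ne (n : ℕ) : run n true true (wW n) (2 * n, 0) ≠ (2 * n, 0) := by
  simp [wW, run_append, run_hW_2n, sw01, sw12]

theorem comm_abs (D C : ℕ × ℕ → ℕ × ℕ) (t : ℕ) (hD : ∀ s, D (D s) = s) (hC : ∀ s, C (C s) = s)
    (hC1 : ∀ s, (C s).1 = s.1) (hC2 : ∀ s, s.1 ≠ t → C s = s)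
    (h : (∀ i, (D (t, i)).1 ≠ t) ∨ (∀ i, D (t, i) = (t, i))) (s : ℕ × ℕ) :
    C (D (C (D (C (D (C (D s))))))) = s := by
  have key : ∀ s : ℕ × ℕ, s.1 = t → s = (t, s.2) := by rintro ⟨a, b⟩ rfl; rfl
  rcases h with h | h
  · by_cases h1 : s.1 = t
    · have a1 : ∀ s : ℕ × ℕ, s.1 = t → C (D s) = D s := fun s hs => by
        apply hC2; rw [key s hs]; exact h _
      rw [a1 s h1, hD, a1 (C s) (by rw [hC1, h1]), hD, hC]
    · by_cases h2 : (D s).1 = t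
      · have a2 : C (D (C (D s))) = D (C (D s)) := by
          apply hC2
          have : (C (D s)).1 = t := by rw [hC1, h2]
          rw [key _ this]; exact h _
        rw [a2, hD, hC, hD, hC2 s h1]
      · rw [hC2 (D s) h2, hD, hC2 s h1, hC2 (D s) h2, hD, hC2 s h1]
  · by_cases h1 : s.1 = t
    · have a1 : ∀ s : ℕ × ℕ, s.1 = t → D s = s := fun s hs => by
        rw [key s hs]; exact h _
      rw [a1 s h1, a1 (C s) (by rw [hC1, h1]), hC, a1 s h1, a1 (C s) (by rw [hC1, h1]), hC]
    · have h2 : (D s).1 ≠ t := fun h2 => by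
        have := hD s
        rw [key _ h2, h, ← key _ h2] at this
        rw [← this] at h1
        exact h1 h2
      rw [hC2 (D s) h2, hD, hC2 s h1, hC2 (D s) h2, hD, hC2 s h1]

theorem wW_eq (m n : ℕ) (x y : Bool) (h : ¬ (m = n ∧ x = true ∧ y = true)) (s : ℕ × ℕ) :
    run n x y (wW m) s = s := by
  simp only [wW, run_append, hW, run_cons]
  cases y with
  | false =>
    have : ∀ s, act n x false 2 s = s := by intro s; simp [act]
    simp [this, run_dW_invol]
  | true =>
    refine comm_abs (run n x true (dW (2 * m))) (act n x true 2) (2 * n) (run_dW_invol n x true _)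
      (act_act n x true 2) (by intro s; simp [act])
      (by rintro ⟨a, b⟩ hs; simp only at hs; simp [act, hs]) ?_ s
    by_cases hmn : m = n
    · subst hmn
      right
      intro i
      have hx : x = false := by cases x <;> simp_all
      subst hx
      rw [run_dW_even, if_neg (by omega)]
      ext <;> simp; omega
    · left
      intro i
      rw [run_dW_even]
      split_ifs <;> simp <;> omega

/-! The permutations of `ℕ`. -/

open Nat.Partrec (Code)

/-- The flip parameter of component `(n, s)`. -/
def xp (s : ℕ) : Bool := !(decide (s = 0))
/-- The `c` parameter of component `(n, s)`. -/
def yp (c : Code) (n s : ℕ) : Bool := decide (s = 0) || (Code.evaln (s - 1) c n).isSome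

/-- States: component `(n, s)`, position `p`, fibre `i`. -/
abbrev St := (ℕ × ℕ) × (ℕ × ℕ)

/-- The letter action on states. -/
def F (c : Code) (l : ℕ) (z : St) : St :=
  (z.1, act z.1.1 (xp z.1.2) (yp c z.1.1 z.1.2) l z.2)

/-- The letter action on naturals. -/
def fN (c : Code) (l : ℕ) (m : ℕ) : ℕ := Encodable.encode (F c l (Denumerable.ofNat St m))

theorem fN_invol (c : Code) (l : ℕ) : Function.Involutive (fN c l) := by
  intro m
  unfold fN
  rw [Denumerable.ofNat_encode]
  unfold F
  rw [act_act]
  exact Denumerable.encode_ofNat (α := St) m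

/-- The generators. -/
def gen (c : Code) (l : Fin 3) : Equiv.Perm ℕ := (fN_invol c l.val).toPerm

theorem lift_gen (c : Code) (w : Wd) (z : St) :
    FreeGroup.lift (gen c) (FreeGroup.mk w) (Encodable.encode z) =
      Encodable.encode ((z.1, run z.1.1 (xp z.1.2) (yp c z.1.1 z.1.2) w z.2) : St) := by
  rw [FreeGroup.lift_mk]
  induction w with
  | nil => simp [run_nil]
  | cons l w ih =>
    have hinv : (gen c l.1)⁻¹ = gen c l.1 := by
      change (gen c l.1).symm = gen c l.1
      exact Function.Involutive.toPerm_symm _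
    rw [List.map_cons, List.prod_cons, Equiv.Perm.mul_apply, ih, hinv, Bool.cond_self, run_cons]
    change fN c l.1.val _ = _
    unfold fN
    rw [Denumerable.ofNat_encode]
    rfl

theorem lift_gen_one (c : Code) (w : Wd) :
    FreeGroup.lift (gen c) (FreeGroup.mk w) = 1 ↔
      ∀ n s p, Tr w n (xp s) (yp c n s) p := by
  constructor
  · intro h n s p i
    have := lift_gen c w ((n, s), (p, i))
    rw [h, Equiv.Perm.one_apply] at this
    have := Encodable.encode_injective this
    simp only [Prod.mk.injEq] at this
    ext <;> simp [← this.2]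
  · intro h
    ext m
    obtain ⟨z, rfl⟩ : ∃ z : St, Encodable.encode z = m := ⟨Denumerable.ofNat St m, Denumerable.encode_ofNat m⟩
    rw [lift_gen]
    have := h z.1.1 z.1.2 z.2.1 z.2.2
    simp only [Prod.mk.eta] at this
    simp [this]

theorem lift_gen_iff (c : Code) (S : Set ℕ) (hS : ∀ n, n ∉ S ↔ (c.eval n).Dom) (w : Wd) :
    FreeGroup.lift (gen c) (FreeGroup.mk w) = 1 ↔
      ∀ n p, Tr w n false true p ∧ Tr w n true false p ∧ (n ∉ S → Tr w n true true p) := by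
  have hdom : ∀ n, n ∉ S ↔ ∃ s, (Code.evaln s c n).isSome := by
    intro n
    rw [hS, Part.dom_iff_mem]
    constructor
    · rintro ⟨v, hv⟩
      obtain ⟨k, hk⟩ := Code.evaln_complete.1 hv
      exact ⟨k, Option.isSome_iff_exists.2 ⟨v, hk⟩⟩
    · rintro ⟨k, hk⟩
      obtain ⟨v, hv⟩ := Option.isSome_iff_exists.1 hk
      exact ⟨v, Code.evaln_complete.2 ⟨k, hv⟩⟩
  rw [lift_gen_one]
  constructor
  · intro h n p
    refine ⟨by simpa [xp, yp] using h n 0 p, by simpa [xp, yp, Code.evaln] using h n 1 p, ?_⟩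
    intro hn
    obtain ⟨s, hs⟩ := (hdom n).1 hn
    simpa [xp, yp, hs] using h n (s + 1) p
  · intro h n s p
    rcases Nat.eq_zero_or_pos s with h0 | h0
    · subst h0
      simpa [xp, yp] using (h n p).1
    · have h0 : s ≠ 0 := by omega
      cases hv : (Code.evaln (s - 1) c n).isSome with
      | false => simpa [xp, yp, h0, hv] using (h n p).2.1
      | true => simpa [xp, yp, h0, hv] using (h n p).2.2 ((hdom n).2 ⟨_, hv⟩)

/-! Computability. -/

open Primrec

theorem prim_sw01 : Primrec sw01 :=
  Primrec.ite (Primrec.eq.comp .id (.const 0)) (.const 1)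
    (Primrec.ite (Primrec.eq.comp .id (.const 1)) (.const 0) .id)

theorem prim_sw12 : Primrec sw12 :=
  Primrec.ite (Primrec.eq.comp .id (.const 1)) (.const 2)
    (Primrec.ite (Primrec.eq.comp .id (.const 2)) (.const 1) .id)

theorem prim_act {α : Type*} [Primcodable α] {n : α → ℕ} {x y : α → Bool} {l : α → ℕ}
    {s : α → ℕ × ℕ} (hn : Primrec n) (hx : Primrec x) (hy : Primrec y) (hl : Primrec l)
    (hs : Primrec s) : Primrec fun a => act (n a) (x a) (y a) (l a) (s a) := by
  have hp : Primrec fun a => (s a).1 := Primrec.fst.comp hs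
  have hi : Primrec fun a => (s a).2 := Primrec.snd.comp hs
  have hev : PrimrecPred fun a => (s a).1 % 2 = 0 :=
    Primrec.eq.comp (Primrec.nat_mod.comp hp (.const 2)) (.const 0)
  have hup : Primrec fun a => (s a).1 + 1 := Primrec.succ.comp hp
  have hdn : Primrec fun a => (s a).1 - 1 := Primrec.nat_sub.comp hp (.const 1)
  unfold act
  refine Primrec.ite (Primrec.eq.comp hl (.const 0)) ((Primrec.ite hev hup hdn).pair hi) ?_
  refine Primrec.ite (Primrec.eq.comp hl (.const 1)) ?_ ?_
  · refine Primrec.ite (Primrec.eq.comp hp (.const 0)) ?_ ((Primrec.ite hev hdn hup).pair hi)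
    exact (Primrec.const 0).pair
      (Primrec.ite (Primrec.eq.comp hx (.const true)) (prim_sw01.comp hi) hi)
  · refine hp.pair (Primrec.ite (PrimrecPred.and ?_ ?_) (prim_sw12.comp hi) hi)
    · exact Primrec.eq.comp hy (.const true)
    · exact Primrec.eq.comp hp (Primrec.nat_mul.comp (.const 2) hn)

theorem prim_run {α : Type*} [Primcodable α] {n : α → ℕ} {x y : α → Bool} {w : α → Wd}
    {s : α → ℕ × ℕ} (hn : Primrec n) (hx : Primrec x) (hy : Primrec y) (hw : Primrec w)
    (hs : Primrec s) : Primrec fun a => run (n a) (x a) (y a) (w a) (s a) := by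
  unfold run
  refine Primrec.list_foldr (h := fun a b => act (n a) (x a) (y a) b.1.1.val b.2) hw hs ?_
  exact prim_act (hn.comp .fst) (hx.comp .fst) (hy.comp .fst)
    (Primrec.fin_val.comp (Primrec.fst.comp (Primrec.fst.comp .snd))) (Primrec.snd.comp .snd)

theorem comp_gen (c : Code) (l : Fin 3) : Computable (gen c l) := by
  have h : Primrec (fN c l.val) := by
    unfold fN F
    refine Primrec.encode.comp ?_
    have hz : Primrec (Denumerable.ofNat St) := Primrec.ofNat St
    have hn : Primrec fun m => (Denumerable.ofNat St m).1.1 := Primrec.fst.comp (Primrec.fst.comp hz)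
    have hs : Primrec fun m => (Denumerable.ofNat St m).1.2 := Primrec.snd.comp (Primrec.fst.comp hz)
    have h0 : Primrec fun m => decide ((Denumerable.ofNat St m).1.2 = 0) :=
      (Primrec.eq.comp hs (.const 0)).decide
    refine (Primrec.fst.comp hz).pair (prim_act hn ?_ ?_ (.const _) (Primrec.snd.comp hz))
    · exact Primrec.not.comp h0
    · refine Primrec.or.comp h0 (Primrec.option_isSome.comp ?_)
      exact Code.primrec_evaln.comp
        (((Primrec.nat_sub.comp hs (.const 1)).pair (.const c)).pair hn)
  exact h.to_comp

theorem prim_dW : Primrec dW := by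
  refine (Primrec.nat_rec₁ (f := fun _ v => (1, true) :: (0, true) :: v)
    ([(1, true)] : Wd) ?_).of_eq ?_
  · exact Primrec.list_cons.comp (.const _) (Primrec.list_cons.comp (.const _) .snd)
  · intro n
    induction n with
    | zero => rfl
    | succ n ih => simp only [dW, ← ih]

theorem prim_wW : Primrec wW := by
  have hh : Primrec hW := Primrec.list_cons.comp (.const _)
    (prim_dW.comp (Primrec.nat_mul.comp (.const 2) .id))
  exact Primrec.list_append.comp hh (Primrec.list_append.comp hh (Primrec.list_append.comp hh hh))

/-- Bound on the codes of points to be checked. -/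
def bd (w : Wd) : ℕ :=
  Nat.pair (w.length + 3) (Nat.pair (3 * w.length + 9) 3) + 1

/-- The atomic check. -/
def Chk (b : Wd × List Bool) (z : ℕ) : Prop :=
  let n := z.unpair.1
  let s := z.unpair.2.unpair
  run n false true b.1 s = s ∧ run n true false b.1 s = s ∧
    (b.2.getD n true = true ∨ run n true true b.1 s = s)

theorem prim_chk : PrimrecPred fun b : Wd × List Bool => ∀ z ∈ List.range (bd b.1), Chk b z := by
  have hR : PrimrecRel fun (z : ℕ) (b : Wd × List Bool) => Chk b z := by
    have hn : Primrec fun a : ℕ × (Wd × List Bool) => a.1.unpair.1 :=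
      Primrec.fst.comp (Primrec.unpair.comp .fst)
    have hs : Primrec fun a : ℕ × (Wd × List Bool) => a.1.unpair.2.unpair :=
      Primrec.unpair.comp (Primrec.snd.comp (Primrec.unpair.comp .fst))
    have hw : Primrec fun a : ℕ × (Wd × List Bool) => a.2.1 := Primrec.fst.comp .snd
    have hb : Primrec fun a : ℕ × (Wd × List Bool) => a.2.2 := Primrec.snd.comp .snd
    have hr (x y : Bool) : PrimrecPred fun a : ℕ × (Wd × List Bool) =>
        run a.1.unpair.1 x y a.2.1 a.1.unpair.2.unpair = a.1.unpair.2.unpair :=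
      Primrec.eq.comp (prim_run hn (.const x) (.const y) hw hs) hs
    refine PrimrecPred.and (hr _ _) (PrimrecPred.and (hr _ _) (PrimrecPred.or ?_ (hr _ _)))
    exact Primrec.eq.comp ((Primrec.list_getD true).comp hb hn) (.const true)
  have hbd : Primrec fun b : Wd × List Bool => bd b.1 := by
    have hl : Primrec fun b : Wd × List Bool => b.1.length := Primrec.list_length.comp .fst
    unfold bd
    refine Primrec.succ.comp (Primrec₂.natPair.comp (Primrec.nat_add.comp hl (.const 3))
      (Primrec₂.natPair.comp (Primrec.nat_add.comp (Primrec.nat_mul.comp (.const 3) hl)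
        (.const 9)) (.const 3)))
  exact (PrimrecRel.forall_mem_list hR).comp (Primrec.list_range.comp hbd) .id

theorem pair_le {a b c d : ℕ} (h1 : a ≤ c) (h2 : b ≤ d) : Nat.pair a b ≤ Nat.pair c d := by
  rcases h1.eq_or_lt with rfl | h1
  · rcases h2.eq_or_lt with rfl | h2
    · exact le_rfl
    · exact (Nat.pair_lt_pair_right _ h2).le
  · rcases h2.eq_or_lt with rfl | h2
    · exact (Nat.pair_lt_pair_left _ h1).le
    · exact ((Nat.pair_lt_pair_left _ h1).trans (Nat.pair_lt_pair_right _ h2)).le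

open Classical in
theorem chk_iff (c : Code) (S : Set ℕ) (hS : ∀ n, n ∉ S ↔ (c.eval n).Dom) (w : Wd) :
    FreeGroup.lift (gen c) (FreeGroup.mk w) = 1 ↔
      ∀ z ∈ List.range (bd w),
        Chk (w, (List.range (bd w)).map fun m => decide (m ∈ S)) z := by
  have hget : ∀ n, n < bd w →
      (((List.range (bd w)).map fun m => decide (m ∈ S)).getD n true = true ↔ n ∈ S) := by
    intro n hn
    simp [List.getD, hn]
  rw [lift_gen_iff c S hS]
  constructor
  · intro h z hz
    have hz := List.mem_range.1 hz
    have hn : z.unpair.1 < bd w := lt_of_le_of_lt (Nat.unpair_left_le z) hz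
    obtain ⟨h1, h2, h3⟩ := h z.unpair.1 z.unpair.2.unpair.1
    refine ⟨h1 _, h2 _, ?_⟩
    by_cases hmem : z.unpair.1 ∈ S
    · left; exact (hget _ hn).2 hmem
    · right; exact h3 hmem _
  · intro h
    have key : ∀ n ≤ w.length + 3, ∀ p ≤ 3 * w.length + 9, ∀ i ≤ 3,
        run n false true w (p, i) = (p, i) ∧ run n true false w (p, i) = (p, i) ∧
        (n ∉ S → run n true true w (p, i) = (p, i)) := by
      intro n hn p hp i hi
      have hz : Nat.pair n (Nat.pair p i) < bd w :=
        Nat.lt_succ_of_le (pair_le hn (pair_le hp hi))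
      have hnb : n < bd w := lt_of_le_of_lt (Nat.left_le_pair _ _) hz
      have := h _ (List.mem_range.2 hz)
      simp only [Chk, Nat.unpair_pair] at this
      obtain ⟨h1, h2, h3⟩ := this
      refine ⟨h1, h2, fun hnS => ?_⟩
      rcases h3 with h3 | h3
      · exact absurd ((hget n hnb).1 h3) hnS
      · exact h3
    apply Tr_bounded w S (w.length + 3) (3 * w.length + 9) le_rfl (by omega)
    · exact fun n hn p hp => Tr_small _ _ _ _ _ fun i hi => (key n hn p hp i hi).1
    · exact fun n hn p hp => Tr_small _ _ _ _ _ fun i hi => (key n hn p hp i hi).2.1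
    · exact fun n hn p hp hnS => Tr_small _ _ _ _ _ fun i hi => (key n hn p hp i hi).2.2 hnS

theorem prim_bd : Primrec bd := by
  have hl : Primrec fun b : Wd => b.length := Primrec.list_length
  unfold bd
  exact Primrec.succ.comp (Primrec₂.natPair.comp (Primrec.nat_add.comp hl (.const 3))
    (Primrec₂.natPair.comp (Primrec.nat_add.comp (Primrec.nat_mul.comp (.const 3) hl)
      (.const 9)) (.const 3)))

/-- Total decoding of words. -/
def dec (m : ℕ) : Wd := (Encodable.decode (α := Wd) m).getD []

theorem prim_dec : Primrec dec := Primrec.option_getD.comp Primrec.decode (.const [])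

open Classical in
theorem red1 (c : Code) (S : Set ℕ) (hS : ∀ n, n ∉ S ↔ (c.eval n).Dom) :
    TTRed (Encodable.encode ''
      {w : List (Fin 3 × Bool) | FreeGroup.lift (gen c) (FreeGroup.mk w) = 1}) S := by
  have hP : PrimrecPred fun a : ℕ × List Bool => Encodable.encode (dec a.1) = a.1 ∧
      ∀ z ∈ List.range (bd (dec a.1)), Chk (dec a.1, a.2) z := by
    refine PrimrecPred.and ?_ ?_
    · exact Primrec.eq.comp (Primrec.encode.comp (prim_dec.comp .fst)) .fst
    · exact prim_chk.comp ((prim_dec.comp .fst).pair .snd)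
  refine ⟨fun m => List.range (bd (dec m)), fun m L => decide (Encodable.encode (dec m) = m ∧
      ∀ z ∈ List.range (bd (dec m)), Chk (dec m, L) z),
      (Primrec.list_range.comp (prim_bd.comp prim_dec)).to_comp, hP.decide.to_comp, ?_⟩
  intro m
  rw [decide_eq_true_iff]
  constructor
  · rintro ⟨w, hw, rfl⟩
    have : dec (Encodable.encode w) = w := by simp [dec]
    rw [this]
    refine ⟨rfl, ?_⟩
    convert (chk_iff c S hS w).1 hw
  · rintro ⟨h1, h2⟩
    refine ⟨dec m, ?_, h1⟩
    refine (chk_iff c S hS (dec m)).2 ?_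
    convert h2

open Classical in
theorem red2 (c : Code) (S : Set ℕ) (hS : ∀ n, n ∉ S ↔ (c.eval n).Dom) :
    TTRed S (Encodable.encode ''
      {w : List (Fin 3 × Bool) | FreeGroup.lift (gen c) (FreeGroup.mk w) = 1}) := by
  refine ⟨fun n => [Encodable.encode (wW n)], fun _ L => L.getD 0 true, ?_, ?_, ?_⟩
  · exact (Primrec.list_cons.comp (Primrec.encode.comp prim_wW) (.const [])).to_comp
  · exact ((Primrec.list_getD true).comp Primrec.snd (.const 0)).to_comp
  · intro n
    have h : n ∈ S ↔ FreeGroup.lift (gen c) (FreeGroup.mk (wW n)) = 1 := by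
      rw [lift_gen_iff c S hS]
      constructor
      · intro hn m p
        refine ⟨fun i => wW_eq _ _ _ _ (by simp) _, fun i => wW_eq _ _ _ _ (by simp) _, ?_⟩
        intro hm i
        refine wW_eq _ _ _ _ ?_ _
        rintro ⟨rfl, -⟩
        exact hm hn
      · intro h
        by_contra hn
        exact wW_ne n ((h n (2 * n)).2.2 hn 0)
    rw [h]
    simp

end WP

theorem stmt18 (S : Set ℕ) (hS : CeSet Sᶜ) :
    ∃ g : Fin 3 → Equiv.Perm ℕ,
      (∀ i, Computable ⇑(g i)) ∧
      TTEquiv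
        (Encodable.encode ''
          {w : List (Fin 3 × Bool) | FreeGroup.lift g (FreeGroup.mk w) = 1})
        S := by
  obtain ⟨e, he⟩ := hS
  have h : ∀ n, n ∉ S ↔ ((Denumerable.ofNat Nat.Partrec.Code e).eval n).Dom := fun n => by
    rw [← Set.mem_compl_iff, he]; rfl
  exact ⟨WP.gen _, WP.comp_gen _, WP.red1 _ S h, WP.red2 _ S h⟩
end
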